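/- (Vanishing lemma) Let {φ_n} ⊂ X be a sequence with sup_n ∫_{ℝ³} f_n dx < ∞, where f_n = |∇φ_n|² + |A(φ_n)|² + |φ_n − P|⁶, and let {D_n} be a sequence of measurable subsets of ℝ³. If for every R > 0, lim_{n→∞} sup_{y ∈ ℝ³} ∫_{B(y,R) ∩ D_n} f_n dx = 0, then lim_{n→∞} ∫_{D_n} det(φ_n − P, ∇φ_n) dx = 0. -/

import Mathlib

/- Common setting: Skyrme maps φ : ℝ³ → S³ ⊂ ℝ⁴ with weak partial derivatives. -/

open MeasureTheory Real Filter
open scoped Topology ENNReal BigOperators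

noncomputable section

abbrev R3 : Type := Fin 3 → ℝ
abbrev R4 : Type := Fin 4 → ℝ

/-- Euclidean dot product on ℝ⁴. -/
def dot (u v : R4) : ℝ := ∑ a, u a * v a

/-- Squared Euclidean norm on ℝ⁴. -/
def nsq (u : R4) : ℝ := dot u u

/-- |u∧v|² = |u|²|v|² − ⟨u,v⟩². -/
def wedgeSq (u v : R4) : ℝ := nsq u * nsq v - (dot u v) ^ 2

/-- Gram determinant of three vectors of ℝ⁴. -/
def gram (u v w : R4) : ℝ :=
  Matrix.det !![dot u u, dot u v, dot u w; dot v u, dot v v, dot v w; dot w u, dot w v, dot w w]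

/-- Determinant of the 4×4 matrix with columns a, b, c, d. -/
def det4 (a b c d : R4) : ℝ := Matrix.det (Matrix.of fun i j => ![a, b, c, d] j i)

/-- Smooth compactly supported test functions on ℝ³. -/
def IsTestFun {E : Type*} [NormedAddCommGroup E] [NormedSpace ℝ E] (ψ : R3 → E) : Prop :=
  ContDiff ℝ (⊤ : ℕ∞) ψ ∧ HasCompactSupport ψ

/-- A weakly differentiable map φ : ℝ³ → S³ ⊂ ℝ⁴ together with its weak
partial derivatives `pderiv i = ∂ᵢφ`. -/
structure SkyrmeMap where
  toFun : R3 → R4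
  pderiv : Fin 3 → R3 → R4
  meas : Measurable toFun
  pderiv_locInt : ∀ i, LocallyIntegrable (pderiv i) volume
  sphere : ∀ᵐ x : R3, nsq (toFun x) = 1
  weak : ∀ (i : Fin 3) (a : Fin 4) (ψ : R3 → ℝ), IsTestFun ψ →
    ∫ x : R3, fderiv ℝ ψ x (Pi.single i 1) * toFun x a
      = - ∫ x : R3, ψ x * pderiv i x a

/-- |∇φ|² = Σᵢ |∂ᵢφ|². -/
def gradSq (φ : SkyrmeMap) (x : R3) : ℝ := ∑ i, nsq (φ.pderiv i x)

/-- |A(φ)|² = Σᵢⱼ |∂ᵢφ∧∂ⱼφ|². -/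
def ASq (φ : SkyrmeMap) (x : R3) : ℝ := ∑ i, ∑ j, wedgeSq (φ.pderiv i x) (φ.pderiv j x)

/-- The Skyrme energy density |∇φ|² + |A(φ)|². -/
def energyDensity (φ : SkyrmeMap) (x : R3) : ℝ := gradSq φ x + ASq φ x

/-- φ ∈ X : finite Skyrme energy. -/
def memX (φ : SkyrmeMap) : Prop := Integrable (energyDensity φ) volume

/-- The Skyrme energy ℰ(φ). -/
def energy (φ : SkyrmeMap) : ℝ := ∫ x, energyDensity φ x

/-- det(φ, ∇φ)(x). -/
def detDen (φ : SkyrmeMap) (x : R3) : ℝ :=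
  det4 (φ.toFun x) (φ.pderiv 0 x) (φ.pderiv 1 x) (φ.pderiv 2 x)

/-- The topological degree d(φ) = (1/(2π²)) ∫ det(φ,∇φ). -/
def degree (φ : SkyrmeMap) : ℝ := (1 / (2 * π ^ 2)) * ∫ x, detDen φ x

/-- I_k = inf of the energy over maps of degree k. -/
def Skyrme.I (k : ℤ) : ℝ :=
  sInf {E : ℝ | ∃ φ : SkyrmeMap, memX φ ∧ degree φ = (k : ℝ) ∧ energy φ = E}

/-- The north pole P = (0,0,0,1) of S³. -/
def northPole : R4 := ![0, 0, 0, 1]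

/-- The Euclidean ball B(y,r) in ℝ³. -/
def eball (y : R3) (r : ℝ) : Set R3 := {x | ∑ i, (x i - y i) ^ 2 < r ^ 2}

lemma nsq_nonneg' (u : R4) : 0 ≤ nsq u := by
  unfold nsq dot; exact Finset.sum_nonneg fun a _ => mul_self_nonneg _

lemma wedgeSq_nonneg (u v : R4) : 0 ≤ wedgeSq u v := by
  have h := Finset.sum_mul_sq_le_sq_mul_sq Finset.univ u v
  unfold wedgeSq nsq dot
  simp only [← pow_two]
  linarith

lemma wedgeSq_symm (u v : R4) : wedgeSq u v = wedgeSq v u := by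
  unfold wedgeSq nsq dot
  simp only [Fin.sum_univ_four]; ring

def gr (b c d : R4) : ℝ := nsq b * nsq c * nsq d + 2 * dot b c * dot b d * dot c d
  - nsq b * (dot c d)^2 - nsq c * (dot b d)^2 - nsq d * (dot b c)^2

lemma quad_nonneg {n m x y s : ℝ} (hn : 0 ≤ n) (hm : 0 ≤ m) (h : 0 ≤ n * m - s^2) :
    0 ≤ n * y^2 - 2 * x * y * s + m * x^2 := by
  rcases hn.eq_or_lt with h0 | h0
  · subst h0
    have : s = 0 := by nlinarith
    subst this; nlinarith [mul_nonneg hm (sq_nonneg x)]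
  · have : 0 ≤ n * (n * y^2 - 2 * x * y * s + m * x^2) := by
      nlinarith [sq_nonneg (n*y-x*s), mul_nonneg (sq_nonneg x) h]
    exact nonneg_of_mul_nonneg_right this h0

lemma gr_le (b c d : R4) : gr b c d ≤ wedgeSq c d * nsq b := by
  have := quad_nonneg (x := dot b c) (y := dot b d) (nsq_nonneg' c) (nsq_nonneg' d) (wedgeSq_nonneg c d)
  unfold gr wedgeSq; nlinarith

lemma gr_mul_le (b c d : R4) : gr b c d * nsq b ≤ wedgeSq b c * wedgeSq b d := by
  unfold gr wedgeSq; nlinarith [sq_nonneg (nsq b * dot c d - dot b c * dot b d)]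

lemma det4_sq_le (a b c d : R4) : (det4 a b c d)^2 ≤ nsq a * gr b c d := by
  let C : R4 := ![b 1 * (c 2 * d 3 - c 3 * d 2) - c 1 * (b 2 * d 3 - b 3 * d 2) + d 1 * (b 2 * c 3 - b 3 * c 2),
    -(b 0 * (c 2 * d 3 - c 3 * d 2) - c 0 * (b 2 * d 3 - b 3 * d 2) + d 0 * (b 2 * c 3 - b 3 * c 2)),
    b 0 * (c 1 * d 3 - c 3 * d 1) - c 0 * (b 1 * d 3 - b 3 * d 1) + d 0 * (b 1 * c 3 - b 3 * c 1),
    -(b 0 * (c 1 * d 2 - c 2 * d 1) - c 0 * (b 1 * d 2 - b 2 * d 1) + d 0 * (b 1 * c 2 - b 2 * c 1))]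
  have h1 : det4 a b c d = dot a C := by
    unfold det4 dot
    simp [Matrix.det_succ_row_zero, Fin.sum_univ_succ, Fin.succAbove, C]
    ring
  have h2 : gr b c d = nsq C := by
    unfold gr nsq dot
    simp only [Fin.sum_univ_four, C, Matrix.cons_val]
    ring
  have := wedgeSq_nonneg a C
  rw [h1, h2]; unfold wedgeSq at this; linarith

lemma gr_nonneg (b c d : R4) : 0 ≤ gr b c d := by
  have := det4_sq_le ![1,0,0,0] b c d
  have h2 : nsq ![1,0,0,0] = 1 := by unfold nsq dot; simp [Fin.sum_univ_four]
  rw [h2, one_mul] at this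
  exact (sq_nonneg _).trans this

lemma gradSq_nonneg (φ : SkyrmeMap) (x : R3) : 0 ≤ gradSq φ x :=
  Finset.sum_nonneg fun i _ => nsq_nonneg' _

lemma ASq_nonneg (φ : SkyrmeMap) (x : R3) : 0 ≤ ASq φ x :=
  Finset.sum_nonneg fun i _ => Finset.sum_nonneg fun j _ => wedgeSq_nonneg _ _

lemma wedge_le_ASq (φ : SkyrmeMap) (x : R3) (i j : Fin 3) :
    wedgeSq (φ.pderiv i x) (φ.pderiv j x) ≤ ASq φ x := by
  unfold ASq
  refine le_trans ?_ (Finset.single_le_sum (f := fun i => ∑ j, wedgeSq (φ.pderiv i x) (φ.pderiv j x)) (fun i _ => Finset.sum_nonneg fun j _ => wedgeSq_nonneg _ _) (Finset.mem_univ i))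
  exact Finset.single_le_sum (f := fun j => wedgeSq (φ.pderiv i x) (φ.pderiv j x)) (fun j _ => wedgeSq_nonneg _ _) (Finset.mem_univ j)

lemma nsq_le_gradSq (φ : SkyrmeMap) (x : R3) (i : Fin 3) :
    nsq (φ.pderiv i x) ≤ gradSq φ x :=
  Finset.single_le_sum (f := fun i => nsq (φ.pderiv i x)) (fun i _ => nsq_nonneg' _) (Finset.mem_univ i)

lemma sphere_bound {u v : R4} (hu : nsq u = 1) (hv : nsq v = 1) : nsq (u - v) ≤ 4 := by
  have : 0 ≤ nsq (u + v) := nsq_nonneg' _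
  unfold nsq dot at *
  simp only [Fin.sum_univ_four, Pi.add_apply, Pi.sub_apply] at *
  nlinarith

lemma nsq_north : nsq northPole = 1 := by
  unfold nsq dot northPole; simp [Fin.sum_univ_four]

/-- pointwise determinant bound -/
lemma det_pointwise (φ : SkyrmeMap) (x : R3) (hx : nsq (φ.toFun x) = 1) {ε : ℝ} (hε : 0 < ε) :
    |det4 (φ.toFun x - northPole) (φ.pderiv 0 x) (φ.pderiv 1 x) (φ.pderiv 2 x)|
      ≤ 3 * ε * energyDensity φ x +
        {x | ε^2 ≤ nsq (φ.toFun x - northPole)}.indicator (fun _ => 2 * (1/ε)^3) x := by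
  set b := φ.pderiv 0 x
  set c := φ.pderiv 1 x
  set d := φ.pderiv 2 x
  set q := nsq (φ.toFun x - northPole) with hq
  have hq0 : 0 ≤ q := nsq_nonneg' _
  have hq4 : q ≤ 4 := sphere_bound hx nsq_north
  have hT := gradSq_nonneg φ x
  have hW := ASq_nonneg φ x
  have hdet := det4_sq_le (φ.toFun x - northPole) b c d
  have hG0 := gr_nonneg b c d
  set G := gr b c d
  have hGle : G ≤ ASq φ x * gradSq φ x := (gr_le b c d).trans
    (mul_le_mul (wedge_le_ASq φ x 1 2) (nsq_le_gradSq φ x 0) (nsq_nonneg' _) hW)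
  have hG2 : G^2 ≤ (ASq φ x)^3 := by
    have h1 := gr_le b c d
    have h2 := gr_mul_le b c d
    have hw1 : wedgeSq b c ≤ ASq φ x := wedge_le_ASq φ x 0 1
    have hw2 : wedgeSq b d ≤ ASq φ x := wedge_le_ASq φ x 0 2
    have hw3 : wedgeSq c d ≤ ASq φ x := wedge_le_ASq φ x 1 2
    calc G^2 = G * G := sq G
      _ ≤ G * (wedgeSq c d * nsq b) := by gcongr
      _ = wedgeSq c d * (G * nsq b) := by ring
      _ ≤ ASq φ x * (ASq φ x * ASq φ x) := by
        refine mul_le_mul hw3 (h2.trans ?_) (mul_nonneg hG0 (nsq_nonneg' _)) hW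
        exact mul_le_mul hw1 hw2 (wedgeSq_nonneg _ _) hW
      _ = _ := by ring
  set h := √G with hh
  have hh0 : 0 ≤ h := Real.sqrt_nonneg _
  have hhG : h^2 = G := Real.sq_sqrt hG0
  have hhe : h ≤ energyDensity φ x := by
    unfold energyDensity
    apply abs_le_of_sq_le_sq' _ (by positivity) |>.2
    nlinarith
  have he0 : 0 ≤ energyDensity φ x := hh0.trans hhe
  have hWe : ASq φ x ≤ energyDensity φ x := by unfold energyDensity; linarith
  rw [← hhG] at hdet
  have key : ∀ t : ℝ, 0 ≤ t → q ≤ t^2 → |det4 (φ.toFun x - northPole) b c d| ≤ t * h := by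
    intro t ht hqt
    apply abs_le_of_sq_le_sq _ (by positivity)
    rw [mul_pow]
    exact hdet.trans (by gcongr)
  by_cases hc : ε^2 ≤ q
  · rw [Set.indicator_of_mem (by exact hc)]
    have k2 := key 2 (by norm_num) (by linarith)
    by_cases hK : h ≤ (1/ε)^3
    · have : 0 ≤ 3 * ε * energyDensity φ x := by positivity
      linarith
    · push Not at hK
      have h4 : (h * (1/ε))^3 ≤ (ASq φ x)^3 := by
        calc (h * (1/ε))^3 = h^3 * (1/ε)^3 := by ring
          _ ≤ h^3 * h := by gcongr
          _ = (h^2)^2 := by ring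
          _ ≤ _ := by rw [hhG]; exact hG2
      have h5 : h * (1/ε) ≤ ASq φ x := le_of_pow_le_pow_left₀ (by norm_num) hW h4
      have h6 : h ≤ ε * ASq φ x := by
        have := mul_le_mul_of_nonneg_left h5 hε.le
        field_simp at this; linarith
      have h7 : ε * ASq φ x ≤ ε * energyDensity φ x := by gcongr
      have : 0 ≤ ε * energyDensity φ x := by positivity
      have : 0 ≤ 2 * (1/ε)^3 := by positivity
      linarith
  · rw [Set.indicator_of_notMem (by exact hc)]
    have k := key ε hε.le (not_le.mp hc).le
    have : ε * h ≤ ε * energyDensity φ x := by gcongr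
    have : 0 ≤ ε * energyDensity φ x := by positivity
    linarith

/-- The shear `(t, x) ↦ (t, x + t h)` preserves the measure. -/
lemma shear_mp (h : R3) : MeasurePreserving (fun p : ℝ × R3 => (p.1, p.2 + p.1 • h))
    ((volume.restrict (Set.Ioc (0:ℝ) 1)).prod (volume : Measure R3))
    ((volume.restrict (Set.Ioc (0:ℝ) 1)).prod (volume : Measure R3)) := by
  refine MeasurePreserving.skew_product (g := fun t x => x + t • h) (MeasurePreserving.id _) ?_ ?_
  · have : Continuous (Function.uncurry fun (t : ℝ) (x : R3) => x + t • h) := by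
      unfold Function.uncurry; fun_prop
    exact this.measurable
  · exact Filter.Eventually.of_forall fun t => map_add_right_eq_self _ _

lemma shear_integrable {a : R3 → ℝ} (ha : Integrable a) (h : R3) :
    Integrable (fun p : ℝ × R3 => a (p.2 + p.1 • h))
      ((volume.restrict (Set.Ioc (0:ℝ) 1)).prod (volume : Measure R3)) :=
  (shear_mp h).integrable_comp_of_integrable (ha.comp_snd (volume.restrict (Set.Ioc (0:ℝ) 1)))

lemma shear_memLp {a : R3 → ℝ} (ha : MemLp a 2) (h : R3) :
    MemLp (fun p : ℝ × R3 => a (p.2 + p.1 • h)) 2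
      ((volume.restrict (Set.Ioc (0:ℝ) 1)).prod (volume : Measure R3)) :=
  (ha.comp_snd (volume.restrict (Set.Ioc (0:ℝ) 1))).comp_measurePreserving (shear_mp h)

lemma jensen_sq {f : ℝ → ℝ} (hf2 : Integrable (fun t => f t ^ 2) (volume.restrict (Set.Ioc (0:ℝ) 1)))
    (hf : Integrable f (volume.restrict (Set.Ioc (0:ℝ) 1))) :
    (∫ t in Set.Ioc (0:ℝ) 1, f t)^2 ≤ ∫ t in Set.Ioc (0:ℝ) 1, f t ^ 2 := by
  set c := ∫ t in Set.Ioc (0:ℝ) 1, f t with hc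
  have h0 : 0 ≤ ∫ t in Set.Ioc (0:ℝ) 1, (f t - c)^2 := integral_nonneg fun t => sq_nonneg _
  have h1 : ∫ t in Set.Ioc (0:ℝ) 1, (f t - c)^2
      = (∫ t in Set.Ioc (0:ℝ) 1, f t ^ 2) - 2 * c * c + c^2 := by
    have : ∀ t, (f t - c)^2 = f t ^ 2 - 2 * c * f t + c ^ 2 := fun t => by ring
    simp_rw [this]
    have hs : Integrable (fun t => f t ^ 2 - 2 * c * f t) (volume.restrict (Set.Ioc (0:ℝ) 1)) :=
      hf2.sub (hf.const_mul _)
    rw [integral_add hs (integrable_const _),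
      integral_sub hf2 (hf.const_mul _), integral_const_mul, ← hc]
    simp
  nlinarith

lemma isTestFun_shift {ψ : R3 → ℝ} (hψ : IsTestFun ψ) (v : R3) : IsTestFun (fun x => ψ (x + v)) := by
  refine ⟨hψ.1.comp (contDiff_id.add contDiff_const), ?_⟩
  exact hψ.2.comp_homeomorph (Homeomorph.addRight v)

lemma shift_weak {u V : R3 → ℝ} {h : R3} (hu : Measurable u) (hub : ∀ᵐ x, |u x| ≤ 1)
    (hV : MemLp V 2) (hweak : ∀ ψ : R3 → ℝ, IsTestFun ψ →
      ∫ x : R3, fderiv ℝ ψ x h * u x = - ∫ x : R3, ψ x * V x)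
    (ψ : R3 → ℝ) (hψ : IsTestFun ψ) :
    ∫ x, ψ x * (u (x + h) - u x) = ∫ x, ψ x * ∫ t in Set.Ioc (0:ℝ) 1, V (x + t • h) := by
  have hcont := hψ.1.continuous
  have hint : Integrable ψ := hcont.integrable_of_hasCompactSupport hψ.2
  have hdiff : Differentiable ℝ ψ := hψ.1.differentiable (by simp)
  have hdc : Continuous (fun x => fderiv ℝ ψ x h) :=
    (hψ.1.continuous_fderiv (by simp)).clm_apply continuous_const
  have hdi : Integrable (fun x => fderiv ℝ ψ x h) :=
    hdc.integrable_of_hasCompactSupport (hψ.2.fderiv_apply ℝ h)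
  have hbd : ∀ {a : R3 → ℝ}, Integrable a → Integrable (fun x => a x * u x) := by
    intro a ha
    exact ha.mul_bdd (c := 1) hu.aestronglyMeasurable (by simpa using hub)
  have hψh : Integrable (fun x => ψ (x - h)) := hint.comp_sub_right h
  -- step 1 : change of variables
  have s1 : ∫ x, ψ x * (u (x + h) - u x) = ∫ x, (ψ (x - h) - ψ x) * u x := by
    have e1 : ∫ x, ψ x * u (x + h) = ∫ x, ψ (x - h) * u x := by
      rw [← integral_sub_right_eq_self (fun x => ψ x * u (x + h)) h]
      simp
    have i1 : Integrable (fun x => ψ x * u (x + h)) := by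
      have := (hbd hψh).comp_add_right h
      simpa using this
    simp_rw [mul_sub, sub_mul]
    rw [integral_sub i1 (hbd hint), integral_sub (hbd hψh) (hbd hint), e1]
  -- step 2 : fundamental theorem of calculus
  have s2 : ∀ x, ψ (x - h) - ψ x = ∫ t in Set.Ioc (0:ℝ) 1, -(fderiv ℝ ψ (x + t • (-h)) h) := by
    intro x
    rw [← intervalIntegral.integral_of_le zero_le_one]
    have hd : ∀ t ∈ Set.uIcc (0:ℝ) 1, HasDerivAt (fun t : ℝ => ψ (x + t • (-h)))
        (-(fderiv ℝ ψ (x + t • (-h)) h)) t := by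
      intro t _
      have h1 : HasDerivAt (fun t : ℝ => x + t • (-h)) (-h) t := by
        simpa using ((hasDerivAt_id t).smul_const (-h)).const_add x
      have := (hdiff (x + t • (-h))).hasFDerivAt.comp_hasDerivAt t h1
      rw [map_neg] at this
      exact this
    rw [intervalIntegral.integral_eq_sub_of_hasDerivAt hd]
    · simp [sub_eq_add_neg]
    · apply Continuous.intervalIntegrable
      exact (hdc.comp (by fun_prop : Continuous fun t : ℝ => x + t • (-h))).neg
  -- step 3 : Fubini
  have I1 : Integrable (fun p : ℝ × R3 => -(fderiv ℝ ψ (p.2 + p.1 • (-h)) h) * u p.2)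
      ((volume.restrict (Set.Ioc (0:ℝ) 1)).prod (volume : Measure R3)) := by
    refine (shear_integrable hdi (-h)).neg.mul_bdd (c := 1) ?_ ?_
    · exact (hu.comp measurable_snd).aestronglyMeasurable
    · have := (Measure.quasiMeasurePreserving_snd (μ := volume.restrict (Set.Ioc (0:ℝ) 1))
        (ν := (volume : Measure R3))).ae hub
      simpa using this
  have s3 : ∫ x, (ψ (x - h) - ψ x) * u x
      = ∫ t in Set.Ioc (0:ℝ) 1, ∫ x, -(fderiv ℝ ψ (x + t • (-h)) h) * u x := by
    rw [integral_integral_swap I1]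
    congr 1; ext x
    rw [s2 x, integral_mul_const]
  -- step 4 : weak derivative
  have s4 : ∀ t : ℝ, ∫ x, -(fderiv ℝ ψ (x + t • (-h)) h) * u x = ∫ x, ψ x * V (x + t • h) := by
    intro t
    have := hweak _ (isTestFun_shift hψ (t • (-h)))
    simp_rw [fderiv_comp_add_right] at this
    simp_rw [neg_mul]
    rw [integral_neg, this, neg_neg]
    rw [← integral_add_right_eq_self (fun x => ψ (x + t • (-h)) * V x) (t • h)]
    simp
  have I2 : Integrable (fun p : ℝ × R3 => ψ p.2 * V (p.2 + p.1 • h))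
      ((volume.restrict (Set.Ioc (0:ℝ) 1)).prod (volume : Measure R3)) := by
    have hψ2 : MemLp ψ 2 := hcont.memLp_of_hasCompactSupport hψ.2
    exact MemLp.integrable_mul (hψ2.comp_snd (volume.restrict (Set.Ioc (0:ℝ) 1))) (shear_memLp hV h)
  rw [s1, s3]
  simp_rw [s4]
  rw [integral_integral_swap I2]
  congr 1; ext x
  rw [integral_const_mul]

lemma shift_est {u V : R3 → ℝ} {h : R3} (hu : Measurable u) (hub : ∀ᵐ x, |u x| ≤ 1)
    (hV : MemLp V 2) (hweak : ∀ ψ : R3 → ℝ, IsTestFun ψ →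
      ∫ x : R3, fderiv ℝ ψ x h * u x = - ∫ x : R3, ψ x * V x) :
    Integrable (fun x => (u (x + h) - u x)^2) ∧
      ∫ x, (u (x + h) - u x)^2 ≤ ∫ x, (V x)^2 := by
  set G : R3 → ℝ := fun x => ∫ t in Set.Ioc (0:ℝ) 1, V (x + t • h) with hG
  have hsh := shear_memLp hV h
  have hsq : Integrable (fun p : ℝ × R3 => V (p.2 + p.1 • h) ^ 2)
      ((volume.restrict (Set.Ioc (0:ℝ) 1)).prod (volume : Measure R3)) := hsh.integrable_sq
  have hGm : AEStronglyMeasurable G volume := hsh.1.prod_swap.integral_prod_right'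
  have hle : ∀ᵐ x, (G x)^2 ≤ ∫ t in Set.Ioc (0:ℝ) 1, V (x + t • h) ^ 2 := by
    have a1 := hsq.prod_left_ae
    have a2 := hsh.1.prod_swap.prodMk_left
    filter_upwards [a1, a2] with x h1 h2
    refine jensen_sq h1 ?_
    have : MemLp (fun t => V (x + t • h)) 2 (volume.restrict (Set.Ioc (0:ℝ) 1)) :=
      (memLp_two_iff_integrable_sq h2).2 h1
    exact this.integrable (by norm_num)
  have hGi : Integrable (fun x => (G x)^2) := by
    refine Integrable.mono' hsq.integral_prod_right (hGm.pow 2) ?_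
    filter_upwards [hle] with x hx
    rw [Real.norm_of_nonneg (sq_nonneg _)]; exact hx
  have hGL : LocallyIntegrable G volume :=
    ((memLp_two_iff_integrable_sq hGm).2 hGi).locallyIntegrable (by norm_num)
  have huh : ∀ᵐ x, |u (x + h)| ≤ 1 :=
    (measurePreserving_add_right volume h).quasiMeasurePreserving.ae hub
  have hul : LocallyIntegrable (fun x => u (x + h) - u x) volume := by
    have : MemLp (fun x => u (x + h) - u x) ⊤ volume := by
      refine memLp_top_of_bound ((hu.comp (measurable_add_const h)).sub hu).aestronglyMeasurable 2 ?_
      filter_upwards [hub, huh] with x h1 h2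
      rw [Real.norm_eq_abs]
      have := abs_sub (u (x+h)) (u x)
      linarith
    exact this.locallyIntegrable (by simp)
  have hae : ∀ᵐ x, u (x + h) - u x = G x :=
    ae_eq_of_integral_contDiff_smul_eq hul hGL fun ψ h1 h2 =>
      shift_weak hu hub hV hweak ψ ⟨h1, h2⟩
  have hae2 : (fun x => (G x)^2) =ᵐ[volume] fun x => (u (x + h) - u x)^2 := by
    filter_upwards [hae] with x hx
    simp only [hx]
  refine ⟨hGi.congr hae2, ?_⟩
  rw [← integral_congr_ae hae2]
  calc ∫ x, (G x)^2 ≤ ∫ x, ∫ t in Set.Ioc (0:ℝ) 1, V (x + t • h) ^ 2 :=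
        integral_mono_ae hGi hsq.integral_prod_right hle
    _ = ∫ t in Set.Ioc (0:ℝ) 1, ∫ x, V (x + t • h) ^ 2 := (integral_integral_swap hsq).symm
    _ = ∫ t in Set.Ioc (0:ℝ) 1, ∫ x, V x ^ 2 := by
        congr 1; ext t
        exact integral_add_right_eq_self (fun x => V x ^ 2) (t • h)
    _ = _ := by simp

lemma aesm_pderiv (φ : SkyrmeMap) (i : Fin 3) (a : Fin 4) :
    AEStronglyMeasurable (fun x => φ.pderiv i x a) volume :=
  (continuous_apply a).comp_aestronglyMeasurable (φ.pderiv_locInt i).aestronglyMeasurable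

lemma gradSq_integrable (φ : SkyrmeMap) (hX : memX φ) : Integrable (gradSq φ) volume := by
  refine Integrable.mono' hX ?_ ?_
  · unfold gradSq nsq dot
    refine Finset.aestronglyMeasurable_fun_sum _ fun i _ => ?_
    refine Finset.aestronglyMeasurable_fun_sum _ fun a _ => ?_
    exact (aesm_pderiv φ i a).mul (aesm_pderiv φ i a)
  · refine Filter.Eventually.of_forall fun x => ?_
    rw [Real.norm_of_nonneg (gradSq_nonneg φ x)]
    have := ASq_nonneg φ x
    unfold energyDensity; linarith

lemma comp_sq_le (u : R4) (a : Fin 4) : (u a)^2 ≤ nsq u := by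
  unfold nsq dot
  rw [pow_two]
  exact Finset.single_le_sum (f := fun a => u a * u a) (fun _ _ => mul_self_nonneg _) (Finset.mem_univ a)

lemma pderiv_memLp (φ : SkyrmeMap) (hX : memX φ) (i : Fin 3) (a : Fin 4) :
    MemLp (fun x => φ.pderiv i x a) 2 volume := by
  refine (memLp_two_iff_integrable_sq (aesm_pderiv φ i a)).2 ?_
  refine Integrable.mono' (gradSq_integrable φ hX) ((aesm_pderiv φ i a).pow 2) ?_
  refine Filter.Eventually.of_forall fun x => ?_
  rw [Real.norm_of_nonneg (sq_nonneg _)]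
  exact (comp_sq_le _ a).trans (nsq_le_gradSq φ x i)

lemma nsq_shift (φ : SkyrmeMap) (hX : memX φ) {ρ : ℝ} {h : R3} (hh : ∀ i, |h i| ≤ ρ) :
    Integrable (fun x => nsq (φ.toFun (x + h) - φ.toFun x)) ∧
      ∫ x, nsq (φ.toFun (x + h) - φ.toFun x) ≤ 3 * ρ^2 * ∫ x, gradSq φ x := by
  let V : Fin 4 → R3 → ℝ := fun a x => ∑ i, h i * φ.pderiv i x a
  have hV : ∀ a, MemLp (V a) 2 volume := fun a =>
    memLp_finsetSum _ fun i _ => (pderiv_memLp φ hX i a).const_mul (h i)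
  have hm : ∀ a, Measurable (fun x => φ.toFun x a) := fun a => (measurable_pi_apply a).comp φ.meas
  have hest : ∀ a, _ := fun a => shift_est (u := fun x => φ.toFun x a) (V := V a) (h := h) (hm a)
    (by
      filter_upwards [φ.sphere] with x hx
      have := comp_sq_le (φ.toFun x) a
      rw [hx] at this
      exact abs_le_of_sq_le_sq (by simpa using this) zero_le_one) (hV a)
    (by
      intro ψ hψ
      have hcont := hψ.1.continuous
      have hdc : ∀ v, Integrable (fun x => fderiv ℝ ψ x v) := fun v =>
        ((hψ.1.continuous_fderiv (by simp)).clm_apply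
          continuous_const).integrable_of_hasCompactSupport (hψ.2.fderiv_apply ℝ v)
      have hb : ∀ᵐ x, ‖φ.toFun x a‖ ≤ 1 := by
        filter_upwards [φ.sphere] with x hx
        have := comp_sq_le (φ.toFun x) a
        rw [hx] at this
        exact abs_le_of_sq_le_sq (by simpa using this) zero_le_one
      have hψ2 : MemLp ψ 2 := hcont.memLp_of_hasCompactSupport hψ.2
      have e1 : ∀ x, fderiv ℝ ψ x h * φ.toFun x a
          = ∑ i, h i * (fderiv ℝ ψ x (Pi.single i 1) * φ.toFun x a) := by
        intro x
        have : h = ∑ i, h i • (Pi.single i 1 : R3) := by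
          ext j; simp [Finset.sum_apply, Pi.single_apply]
        conv_lhs => rw [this]
        rw [map_sum, Finset.sum_mul]
        refine Finset.sum_congr rfl fun i _ => ?_
        rw [map_smul, smul_eq_mul]; ring
      have e2 : ∀ x, ψ x * V a x = ∑ i, h i * (ψ x * φ.pderiv i x a) := by
        intro x
        simp only [V, Finset.mul_sum]
        exact Finset.sum_congr rfl fun i _ => by ring
      simp_rw [e1, e2]
      rw [integral_finsetSum, integral_finsetSum, ← Finset.sum_neg_distrib]
      · refine Finset.sum_congr rfl fun i _ => ?_
        rw [integral_const_mul, integral_const_mul, φ.weak i a ψ hψ]; ring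
      · intro i _
        exact (MemLp.integrable_mul hψ2 (pderiv_memLp φ hX i a)).const_mul _
      · intro i _
        exact ((hdc _).mul_bdd (c := 1) (hm a).aestronglyMeasurable hb).const_mul _)
  have hn : ∀ x, nsq (φ.toFun (x + h) - φ.toFun x)
      = ∑ a, (φ.toFun (x + h) a - φ.toFun x a)^2 := by
    intro x; unfold nsq dot; simp [pow_two]
  simp_rw [hn]
  refine ⟨integrable_finsetSum _ fun a _ => (hest a).1, ?_⟩
  rw [integral_finsetSum _ fun a _ => (hest a).1, ← integral_const_mul]
  calc _ ≤ ∑ a, ∫ x, V a x ^ 2 := Finset.sum_le_sum fun a _ => (hest a).2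
    _ = ∫ x, ∑ a, V a x ^ 2 := (integral_finsetSum _ fun a _ => (hV a).integrable_sq).symm
    _ ≤ _ := by
      refine integral_mono (integrable_finsetSum _ fun a _ => (hV a).integrable_sq)
        ((gradSq_integrable φ hX).const_mul _) fun x => ?_
      have hsq : ∀ i, h i ^ 2 ≤ ρ^2 := fun i => sq_le_sq' (abs_le.1 (hh i)).1 (abs_le.1 (hh i)).2
      have hVa : ∀ a, V a x ^ 2 ≤ 3 * ρ^2 * ∑ i, φ.pderiv i x a ^ 2 := by
        intro a
        refine (Finset.sum_mul_sq_le_sq_mul_sq Finset.univ h fun i => φ.pderiv i x a).trans ?_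
        refine mul_le_mul_of_nonneg_right ?_ (Finset.sum_nonneg fun _ _ => sq_nonneg _)
        rw [Fin.sum_univ_three]
        linarith [hsq 0, hsq 1, hsq 2]
      refine (Finset.sum_le_sum fun a _ => hVa a).trans ?_
      rw [← Finset.mul_sum, Finset.sum_comm]
      refine le_of_eq ?_
      unfold gradSq nsq dot
      simp [pow_two]

/-- `|φ - P|⁶` as an extended nonnegative function. -/
def Qf (φ : SkyrmeMap) (x : R3) : ℝ≥0∞ := ENNReal.ofReal (nsq (φ.toFun x - northPole) ^ 3)

lemma meas_nsq {f : R3 → R4} (hf : Measurable f) : Measurable fun x => nsq (f x) := by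
  unfold nsq dot
  refine Finset.measurable_fun_sum _ fun a _ => ?_
  have := (measurable_pi_apply a).comp hf
  exact this.mul this

lemma Qf_meas (φ : SkyrmeMap) : Measurable (Qf φ) :=
  ((meas_nsq (φ.meas.sub_const _)).pow_const 3).ennreal_ofReal

lemma cube_shift {u v p : R4} (hu : nsq u = 1) (hv : nsq v = 1) :
    nsq (u - p) ^ 3 ≤ 32 * nsq (v - p) ^ 3 + 512 * nsq (v - u) := by
  have h1 : nsq (u - p) ≤ 2 * nsq (v - p) + 2 * nsq (v - u) := by
    have : 0 ≤ nsq (v - p + (v - u)) := nsq_nonneg' _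
    unfold nsq dot at *
    simp only [Fin.sum_univ_four, Pi.add_apply, Pi.sub_apply] at *
    nlinarith
  have h2 := sphere_bound hv hu
  have h0 := nsq_nonneg' (u - p)
  have h3 := nsq_nonneg' (v - p)
  have h4 := nsq_nonneg' (v - u)
  generalize nsq (u - p) = a at *
  generalize nsq (v - p) = b at *
  generalize nsq (v - u) = d at *
  have h5 : a^3 ≤ (2*b + 2*d)^3 := by gcongr
  have h6 : d^3 ≤ 16 * d := by nlinarith [mul_nonneg h4 h4, mul_nonneg h4 (sub_nonneg.2 h2)]
  have h7 : (2*b+2*d)^3 ≤ 32 * b^3 + 32 * d^3 := by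
    nlinarith [mul_nonneg (add_nonneg h3 h4) (sq_nonneg (b-d))]
  linarith

lemma per_shift (φ : SkyrmeMap) (hX : memX φ) {ρ δ M : ℝ} (hδ : 0 ≤ δ)
    (hM : ∫ x, gradSq φ x ≤ M) {E : Set R3} (hE : MeasurableSet E)
    (hEδ : ∀ x ∈ E, δ ≤ nsq (φ.toFun x - northPole)) {h : R3} (hh : ∀ i, |h i| ≤ ρ) :
    ENNReal.ofReal (δ^3) * volume E ≤
      32 * (∫⁻ x, E.indicator 1 x * Qf φ (x + h)) + ENNReal.ofReal (1536 * ρ^2 * M) := by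
  obtain ⟨hi, hle⟩ := nsq_shift φ hX hh
  have hshift : ∀ᵐ x, nsq (φ.toFun (x + h)) = 1 :=
    (measurePreserving_add_right volume h).quasiMeasurePreserving.ae φ.sphere
  have hmQ : Measurable fun x => Qf φ (x + h) := (Qf_meas φ).comp (measurable_add_const h)
  have hmI : Measurable fun x => E.indicator (1 : R3 → ℝ≥0∞) x * Qf φ (x + h) :=
    (measurable_one.indicator hE).mul hmQ
  calc ENNReal.ofReal (δ^3) * volume E
      = ∫⁻ x, ENNReal.ofReal (δ^3) * E.indicator 1 x := by
        rw [lintegral_const_mul _ (measurable_one.indicator hE), lintegral_indicator_one hE]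
    _ ≤ ∫⁻ x, (32 * (E.indicator 1 x * Qf φ (x + h))
          + ENNReal.ofReal (512 * nsq (φ.toFun (x + h) - φ.toFun x))) := by
        refine lintegral_mono_ae ?_
        filter_upwards [φ.sphere, hshift] with x h1 h2
        by_cases hx : x ∈ E
        · simp only [Set.indicator_of_mem hx, Pi.one_apply, mul_one, one_mul]
          have h3 := cube_shift (p := northPole) h1 h2
          have h4 : δ^3 ≤ nsq (φ.toFun x - northPole) ^ 3 := by
            have := hEδ x hx
            gcongr
          refine (ENNReal.ofReal_le_ofReal (h4.trans h3)).trans ?_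
          rw [ENNReal.ofReal_add, ENNReal.ofReal_mul (by norm_num)]
          · unfold Qf; simp
          · have := nsq_nonneg' (φ.toFun (x + h) - northPole); positivity
          · have := nsq_nonneg' (φ.toFun (x + h) - φ.toFun x); positivity
        · simp [Set.indicator_of_notMem hx]
    _ = 32 * (∫⁻ x, E.indicator 1 x * Qf φ (x + h))
          + ∫⁻ x, ENNReal.ofReal (512 * nsq (φ.toFun (x + h) - φ.toFun x)) := by
        rw [lintegral_add_left (hmI.const_mul 32), lintegral_const_mul _ hmI]
    _ ≤ _ := by
        gcongr
        rw [← ofReal_integral_eq_lintegral_ofReal (hi.const_mul 512)]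
        · apply ENNReal.ofReal_le_ofReal
          rw [integral_const_mul]
          nlinarith [mul_le_mul_of_nonneg_left hM (sq_nonneg ρ)]
        · exact Filter.Eventually.of_forall fun x => mul_nonneg (by norm_num) (nsq_nonneg' _)

lemma measure_est (φ : SkyrmeMap) (hX : memX φ) {ρ δ M : ℝ} (hδ : 0 ≤ δ)
    (hM : ∫ x, gradSq φ x ≤ M) (hQ : ∫⁻ x, Qf φ x ≤ ENNReal.ofReal M)
    {E : Set R3} (hE : MeasurableSet E)
    (hEδ : ∀ x ∈ E, δ ≤ nsq (φ.toFun x - northPole)) {κ : ℝ≥0∞}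
    (hκ : ∀ y, volume (E ∩ Metric.closedBall y ρ) ≤ κ) :
    volume (Metric.closedBall (0:R3) ρ) * (ENNReal.ofReal (δ^3) * volume E) ≤
      32 * (κ * ENNReal.ofReal M) +
        volume (Metric.closedBall (0:R3) ρ) * ENNReal.ofReal (1536 * ρ^2 * M) := by
  set B := Metric.closedBall (0:R3) ρ with hB
  have hBm : MeasurableSet B := Metric.isClosed_closedBall.measurableSet
  have hIE : Measurable (E.indicator (1 : R3 → ℝ≥0∞)) := measurable_one.indicator hE
  have hIB : Measurable (B.indicator (1 : R3 → ℝ≥0∞)) := measurable_one.indicator hBm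
  have hjoint : Measurable fun p : R3 × R3 => E.indicator (1 : R3 → ℝ≥0∞) (p.2 - p.1) * Qf φ p.2 :=
    (hIE.comp (measurable_snd.sub measurable_fst)).mul ((Qf_meas φ).comp measurable_snd)
  have hmain : ∫⁻ h in B, ∫⁻ x, E.indicator 1 x * Qf φ (x + h) ≤ κ * ENNReal.ofReal M := by
    have e1 : ∀ h, ∫⁻ x, E.indicator 1 x * Qf φ (x + h)
        = ∫⁻ y, E.indicator 1 (y - h) * Qf φ y := by
      intro h
      rw [← lintegral_sub_right_eq_self (fun x => E.indicator 1 x * Qf φ (x + h)) h]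
      simp
    simp_rw [e1]
    rw [lintegral_lintegral_swap hjoint.aemeasurable]
    calc _ ≤ ∫⁻ y, κ * Qf φ y := by
          refine lintegral_mono fun y => ?_
          have hm1 : Measurable fun h : R3 => E.indicator (1 : R3 → ℝ≥0∞) (y - h) :=
            hIE.comp (measurable_id.const_sub y)
          rw [lintegral_mul_const _ hm1]
          gcongr
          refine le_trans (le_of_eq ?_) (hκ y)
          rw [← lintegral_indicator hBm,
            ← lintegral_indicator_one (hE.inter Metric.isClosed_closedBall.measurableSet),
            ← lintegral_sub_left_eq_self _ y]
          congr 1; ext x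
          have hmem : y - x ∈ B ↔ x ∈ Metric.closedBall y ρ := by
            simp [hB, Metric.mem_closedBall, dist_eq_norm, norm_sub_rev]
          by_cases h1 : x ∈ Metric.closedBall y ρ <;> by_cases h2 : x ∈ E <;>
            simp [Set.indicator, hmem, h1, h2]
      _ = κ * ∫⁻ y, Qf φ y := lintegral_const_mul _ (Qf_meas φ)
      _ ≤ _ := by gcongr
  have hmeas2 : Measurable fun h => ∫⁻ x, E.indicator (1 : R3 → ℝ≥0∞) x * Qf φ (x + h) := by
    refine Measurable.lintegral_prod_right' (f := fun p : R3 × R3 =>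
      E.indicator (1 : R3 → ℝ≥0∞) p.2 * Qf φ (p.2 + p.1)) ?_
    exact (hIE.comp measurable_snd).mul ((Qf_meas φ).comp (measurable_snd.add measurable_fst))
  calc volume B * (ENNReal.ofReal (δ^3) * volume E)
      = ∫⁻ h in B, ENNReal.ofReal (δ^3) * volume E := by
        rw [setLIntegral_const, mul_comm]
    _ ≤ ∫⁻ h in B, (32 * (∫⁻ x, E.indicator 1 x * Qf φ (x + h))
          + ENNReal.ofReal (1536 * ρ^2 * M)) := by
        refine setLIntegral_mono' hBm fun h hh => ?_
        refine per_shift φ hX hδ hM hE hEδ fun i => ?_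
        have h1 : ‖h‖ ≤ ρ := by simpa [hB] using hh
        exact (norm_le_pi_norm h i).trans h1
    _ = 32 * (∫⁻ h in B, ∫⁻ x, E.indicator 1 x * Qf φ (x + h))
          + volume B * ENNReal.ofReal (1536 * ρ^2 * M) := by
        rw [lintegral_add_left (hmeas2.const_mul 32), lintegral_const_mul _ hmeas2,
          setLIntegral_const, mul_comm (volume B)]
    _ ≤ _ := by gcongr

/-- The full density `f`. -/
def fden (φ : SkyrmeMap) (x : R3) : ℝ := energyDensity φ x + (nsq (φ.toFun x - northPole)) ^ 3

lemma energy_nonneg (φ : SkyrmeMap) (x : R3) : 0 ≤ energyDensity φ x :=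
  add_nonneg (gradSq_nonneg φ x) (ASq_nonneg φ x)

lemma fden_nonneg (φ : SkyrmeMap) (x : R3) : 0 ≤ fden φ x :=
  add_nonneg (energy_nonneg φ x) (pow_nonneg (nsq_nonneg' _) 3)

lemma meas_E (φ : SkyrmeMap) (δ : ℝ) : MeasurableSet {x | δ ≤ nsq (φ.toFun x - northPole)} :=
  measurableSet_le measurable_const (meas_nsq (φ.meas.sub_const _))

lemma meas_eball (y : R3) (R : ℝ) : MeasurableSet (eball y R) := by
  refine IsOpen.measurableSet ?_
  unfold eball
  exact isOpen_lt (by fun_prop) continuous_const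

lemma closedBall_sub_eball (y : R3) {ρ : ℝ} (hρ : 0 < ρ) :
    Metric.closedBall y ρ ⊆ eball y (2 * ρ) := by
  intro x hx
  have h1 : ‖x - y‖ ≤ ρ := by simpa [dist_eq_norm] using hx
  have h2 : ∀ i, (x i - y i)^2 ≤ ρ^2 := by
    intro i
    have := (norm_le_pi_norm (x - y) i).trans h1
    rw [Real.norm_eq_abs] at this
    exact sq_le_sq' (abs_le.1 this).1 (abs_le.1 this).2
  change ∑ i, (x i - y i)^2 < (2 * ρ)^2
  rw [Fin.sum_univ_three]
  nlinarith [h2 0, h2 1, h2 2, sq_pos_of_pos hρ]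

/-- Chebyshev for the set where `δ ≤ |φ - P|²`. -/
lemma cheb (φ : SkyrmeMap) (hint : Integrable (fden φ)) {δ : ℝ} (hδ : 0 < δ) {S : Set R3}
    (hS : MeasurableSet S) {η : ℝ} (hη : ∫ x in S, fden φ x ≤ η) :
    volume (S ∩ {x | δ ≤ nsq (φ.toFun x - northPole)}) ≤ ENNReal.ofReal (η / δ^3) := by
  have h3 : (0:ℝ) < δ^3 := by positivity
  rw [ENNReal.ofReal_div_of_pos h3,
    ENNReal.le_div_iff_mul_le (by left; simpa using h3) (by left; simp), mul_comm]
  calc ENNReal.ofReal (δ^3) * volume (S ∩ {x | δ ≤ nsq (φ.toFun x - northPole)})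
      = ∫⁻ x in S ∩ {x | δ ≤ nsq (φ.toFun x - northPole)}, ENNReal.ofReal (δ^3) := by
        rw [setLIntegral_const]
    _ ≤ ∫⁻ x in S ∩ {x | δ ≤ nsq (φ.toFun x - northPole)}, ENNReal.ofReal (fden φ x) := by
        refine setLIntegral_mono' (hS.inter (meas_E φ δ)) fun x hx => ?_
        apply ENNReal.ofReal_le_ofReal
        have h1 : δ ≤ nsq (φ.toFun x - northPole) := hx.2
        have h2 : δ^3 ≤ nsq (φ.toFun x - northPole)^3 := by gcongr
        have := energy_nonneg φ x
        unfold fden; linarith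
    _ ≤ ∫⁻ x in S, ENNReal.ofReal (fden φ x) := lintegral_mono_set Set.inter_subset_left
    _ = ENNReal.ofReal (∫ x in S, fden φ x) :=
        (ofReal_integral_eq_lintegral_ofReal hint.integrableOn
          (Filter.Eventually.of_forall (fden_nonneg φ))).symm
    _ ≤ _ := ENNReal.ofReal_le_ofReal hη

lemma measure_est_real (φ : SkyrmeMap) (hX : memX φ) (hint : Integrable (fden φ)) {M : ℝ}
    (hM : ∫ x, fden φ x ≤ M) {D : Set R3} (hD : MeasurableSet D) {ρ δ η : ℝ} (hρ : 0 < ρ)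
    (hδ : 0 < δ) (hη0 : 0 ≤ η) (hη : ∀ y, ∫ x in eball y (2 * ρ) ∩ D, fden φ x ≤ η) :
    volume.real (D ∩ {x | δ ≤ nsq (φ.toFun x - northPole)}) ≤
      32 * M / (volume.real (Metric.closedBall (0:R3) ρ) * δ^6) * η + 1536 * M / δ^3 * ρ^2 := by
  have hM0 : 0 ≤ M := (integral_nonneg (fden_nonneg φ)).trans hM
  have hgM : ∫ x, gradSq φ x ≤ M := by
    refine (integral_mono (gradSq_integrable φ hX) hint fun x => ?_).trans hM
    have := ASq_nonneg φ x
    have := pow_nonneg (nsq_nonneg' (φ.toFun x - northPole)) 3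
    change gradSq φ x ≤ gradSq φ x + ASq φ x + _
    linarith
  have hQ : ∫⁻ x, Qf φ x ≤ ENNReal.ofReal M := by
    calc ∫⁻ x, Qf φ x ≤ ∫⁻ x, ENNReal.ofReal (fden φ x) := by
          refine lintegral_mono fun x => ENNReal.ofReal_le_ofReal ?_
          have := energy_nonneg φ x
          unfold fden; linarith
      _ = ENNReal.ofReal (∫ x, fden φ x) := (ofReal_integral_eq_lintegral_ofReal hint
          (Filter.Eventually.of_forall (fden_nonneg φ))).symm
      _ ≤ _ := ENNReal.ofReal_le_ofReal hM
  set E := D ∩ {x | δ ≤ nsq (φ.toFun x - northPole)} with hE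
  have hEm : MeasurableSet E := hD.inter (meas_E φ δ)
  have key := measure_est φ hX (ρ := ρ) hδ.le hgM hQ hEm (fun x hx => hx.2)
    (κ := ENNReal.ofReal (η / δ^3)) (by
      intro y
      refine le_trans (measure_mono ?_) (cheb φ hint hδ ((meas_eball y (2*ρ)).inter hD) (hη y))
      rintro x ⟨⟨h1, h2⟩, h3⟩
      exact ⟨⟨closedBall_sub_eball y hρ h3, h1⟩, h2⟩)
  set B := Metric.closedBall (0:R3) ρ
  have hBfin : volume B ≠ ⊤ := measure_closedBall_lt_top.ne
  have hBpos : 0 < volume.real B :=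
    ENNReal.toReal_pos (Metric.measure_closedBall_pos volume _ hρ).ne' hBfin
  have h2 := ENNReal.toReal_mono (by finiteness) key
  rw [ENNReal.toReal_add (by finiteness) (by finiteness)] at h2
  simp only [ENNReal.toReal_mul] at h2
  rw [ENNReal.toReal_ofReal (by positivity), ENNReal.toReal_ofReal (by positivity),
    ENNReal.toReal_ofReal (by positivity), ENNReal.toReal_ofReal (by positivity)] at h2
  change volume.real B * (δ^3 * volume.real E) ≤ ENNReal.toReal 32 * _ + volume.real B * _ at h2
  have h32 : ENNReal.toReal 32 = 32 := by simp
  rw [h32] at h2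
  generalize volume.real B = β at *
  generalize volume.real E = m at *
  have h3 : 0 < β * δ^3 := by positivity
  have h4 : m ≤ (32 * (η / δ^3 * M) + β * (1536 * ρ^2 * M)) / (β * δ^3) := by
    rw [le_div_iff₀ h3]; linarith
  refine h4.trans (le_of_eq ?_)
  field_simp

/-- Vanishing lemma: if the densities f_n = |∇φ_n|² + |A(φ_n)|² + |φ_n − P|⁶
vanish on the sets D_n, then ∫_{D_n} det(φ_n − P, ∇φ_n) → 0. -/
theorem skyrme_vanishing_lemma (φ : ℕ → SkyrmeMap) (hX : ∀ n, memX (φ n))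
    (D : ℕ → Set R3) (hD : ∀ n, MeasurableSet (D n))
    (hint : ∀ n, Integrable
      (fun x => energyDensity (φ n) x + (nsq ((φ n).toFun x - northPole)) ^ 3) volume)
    (M : ℝ)
    (hM : ∀ n, (∫ x, (energyDensity (φ n) x + (nsq ((φ n).toFun x - northPole)) ^ 3)) ≤ M)
    (hvan : ∀ R > (0 : ℝ), Tendsto (fun n => ⨆ y : R3,
        ∫ x in eball y R ∩ D n,
          (energyDensity (φ n) x + (nsq ((φ n).toFun x - northPole)) ^ 3))
      atTop (𝓝 0)) :
    Tendsto (fun n => ∫ x in D n,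
        det4 ((φ n).toFun x - northPole)
          ((φ n).pderiv 0 x) ((φ n).pderiv 1 x) ((φ n).pderiv 2 x))
      atTop (𝓝 0) := by
  have hint' : ∀ n, Integrable (fden (φ n)) := hint
  have hM' : ∀ n, ∫ x, fden (φ n) x ≤ M := hM
  have hM0 : 0 ≤ M := (integral_nonneg (fden_nonneg (φ 0))).trans (hM' 0)
  have hEt : ∀ δ > (0:ℝ), Tendsto (fun n =>
      volume.real (D n ∩ {x | δ ≤ nsq ((φ n).toFun x - northPole)})) atTop (𝓝 0) := by
    intro δ hδ
    refine Metric.tendsto_atTop'.2 fun τ hτ => ?_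
    have hc : Tendsto (fun ρ : ℝ => 1536 * M / δ^3 * ρ^2) (𝓝[>] 0) (𝓝 0) := by
      have : Continuous (fun ρ : ℝ => 1536 * M / δ^3 * ρ^2) := by fun_prop
      have h := this.tendsto 0
      simp only [ne_eq, OfNat.ofNat_ne_zero, not_false_eq_true, zero_pow, mul_zero] at h
      exact h.mono_left nhdsWithin_le_nhds
    obtain ⟨ρ, hρτ, hρ⟩ := ((hc.eventually_lt_const (half_pos hτ)).and self_mem_nhdsWithin).exists
    have hρ0 : 0 < ρ := hρ
    have hv := (hvan (2 * ρ) (by positivity)).const_mul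
      (32 * M / (volume.real (Metric.closedBall (0:R3) ρ) * δ^6))
    rw [mul_zero] at hv
    obtain ⟨N, hN⟩ := eventually_atTop.1 (hv.eventually_lt_const (half_pos hτ))
    refine ⟨N, fun n hn => ?_⟩
    have hbdd : BddAbove (Set.range fun y : R3 => ∫ x in eball y (2 * ρ) ∩ D n, fden (φ n) x) := by
      refine ⟨M, ?_⟩
      rintro _ ⟨y, rfl⟩
      exact (setIntegral_le_integral (hint' n)
        (Filter.Eventually.of_forall (fden_nonneg (φ n)))).trans (hM' n)
    have hle := fun y => le_ciSup hbdd y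
    have h0 : 0 ≤ ⨆ y : R3, ∫ x in eball y (2 * ρ) ∩ D n, fden (φ n) x :=
      (integral_nonneg (fden_nonneg (φ n))).trans (hle 0)
    have h1 := measure_est_real (φ n) (hX n) (hint' n) (hM' n) (hD n) hρ0 hδ h0 hle
    have h2 := hN n hn.le
    rw [Real.dist_eq, sub_zero, abs_of_nonneg measureReal_nonneg]
    refine lt_of_le_of_lt h1 ?_
    have h3 : 32 * M / (volume.real (Metric.closedBall (0:R3) ρ) * δ^6) *
      (⨆ y : R3, ∫ x in eball y (2 * ρ) ∩ D n, fden (φ n) x) < τ / 2 := h2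
    linarith
  have hbound : ∀ ε > (0:ℝ), ∀ n, ‖∫ x in D n, det4 ((φ n).toFun x - northPole)
          ((φ n).pderiv 0 x) ((φ n).pderiv 1 x) ((φ n).pderiv 2 x)‖ ≤
      3 * ε * M + 2 * (1/ε)^3 *
        volume.real (D n ∩ {x | ε^2 ≤ nsq ((φ n).toFun x - northPole)}) := by
    intro ε hε n
    set S := {x | ε^2 ≤ nsq ((φ n).toFun x - northPole)} with hS
    have hSm : MeasurableSet S := meas_E (φ n) (ε^2)
    have hfin : volume (D n ∩ S) < ⊤ := by
      have h1 := cheb (φ n) (hint' n) (δ := ε^2) (by positivity) (hD n) le_rfl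
      exact lt_of_le_of_lt h1 ENNReal.ofReal_lt_top
    have i1 : Integrable (fun x => 3 * ε * energyDensity (φ n) x) (volume.restrict (D n)) :=
      ((hX n).const_mul _).restrict
    have i2 : Integrable (S.indicator fun _ => 2 * (1/ε)^3) (volume.restrict (D n)) := by
      rw [integrable_indicator_iff hSm]
      refine integrableOn_const ?_
      rw [Measure.restrict_apply hSm, Set.inter_comm]
      exact hfin.ne
    refine (norm_integral_le_of_norm_le (i1.add i2) ?_).trans ?_
    · refine ae_restrict_of_ae ?_
      filter_upwards [(φ n).sphere] with x hx
      exact det_pointwise (φ n) x hx hε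
    · have e1 : ∫ x in D n, energyDensity (φ n) x ≤ M := by
        refine (setIntegral_le_integral (hX n)
          (Filter.Eventually.of_forall (energy_nonneg (φ n)))).trans ?_
        refine (integral_mono (hX n) (hint' n) fun x => ?_).trans (hM' n)
        have := pow_nonneg (nsq_nonneg' ((φ n).toFun x - northPole)) 3
        unfold fden; linarith
      have e2 : ∫ x in D n, S.indicator (fun _ => 2 * (1/ε)^3) x
          = 2 * (1/ε)^3 * volume.real (D n ∩ S) := by
        rw [integral_indicator_const _ hSm, measureReal_restrict_apply hSm, Set.inter_comm,
          smul_eq_mul, mul_comm]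
      have e3 := integral_add i1 i2
      rw [integral_const_mul, e2] at e3
      refine (le_of_eq e3).trans ?_
      gcongr
  refine Metric.tendsto_atTop'.2 fun τ hτ => ?_
  obtain ⟨ε, hε, hετ⟩ : ∃ ε > (0:ℝ), 3 * ε * M < τ / 2 := by
    refine ⟨τ / (6 * (M + 1)), by positivity, ?_⟩
    have : 3 * (τ / (6 * (M + 1))) * M = τ / 2 * (M / (M + 1)) := by field_simp; ring
    rw [this]
    have h1 : M / (M + 1) < 1 := by rw [div_lt_one (by positivity)]; linarith
    nlinarith
  have hv := (hEt (ε^2) (by positivity)).const_mul (2 * (1/ε)^3)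
  rw [mul_zero] at hv
  obtain ⟨N, hN⟩ := eventually_atTop.1 (hv.eventually_lt_const (half_pos hτ))
  refine ⟨N, fun n hn => ?_⟩
  rw [dist_zero_right]
  have h1 := hbound ε hε n
  have h2 := hN n hn.le
  linarith
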